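/- Let C be an n×n real symmetric positive semidefinite matrix of rank r, let s ≤ r, and let F be an n×k real matrix with C = F·Fᵀ (so r ≤ k). Then for every m×n real matrix A and every b ∈ ℝᵐ, there exists a DFact-feasible tuple (Θ, υ, ν, π, τ) for (C, s, A, b; F) whose objective value f(Θ, ν, π, τ) equals the spectral bound Σ_{ℓ=1}^{s} log λ_ℓ(C). In particular, the factorization bound is at most the spectral bound. -/

import Mathlib

open Matrix

/-- The eigenvalues of a real symmetric matrix, sorted in nonincreasing order:
`sortedEigs M 0` is the largest eigenvalue (`λ_1`) and `sortedEigs M (k-1)` the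
smallest (`λ_k`).  For non-Hermitian matrices we return the junk value `0`. -/
noncomputable def sortedEigs {k : ℕ} (M : Matrix (Fin k) (Fin k) ℝ) : Fin k → ℝ :=
  if h : M.IsHermitian then fun i => (h.eigenvalues ∘ Tuple.sort h.eigenvalues) i.rev
  else fun _ => 0

/-- DFact-feasibility of the tuple `(Θ, υ, ν, π, τ)` for the data `(A; F)`:
`Θ ≻ 0`, `υ, ν, π ≥ 0` and `diag(FΘFᵀ) + υ − ν − Aᵀπ − τ𝟙 = 0`. -/
def DFactFeasible {n m k : ℕ} (A : Matrix (Fin m) (Fin n) ℝ) (F : Matrix (Fin n) (Fin k) ℝ)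
    (Θ : Matrix (Fin k) (Fin k) ℝ) (υ ν : Fin n → ℝ) (π : Fin m → ℝ) (τ : ℝ) : Prop :=
  Θ.PosDef ∧ (∀ j, 0 ≤ υ j) ∧ (∀ j, 0 ≤ ν j) ∧ (∀ i, 0 ≤ π i) ∧
    ∀ j, (F * Θ * Fᵀ) j j + υ j - ν j - (∑ i, A i j * π i) - τ = 0

/-- The DFact objective value
`f(Θ, ν, π, τ) = −Σ_{ℓ=k−s+1}^{k} log λ_ℓ(Θ) + νᵀ𝟙 + πᵀb + τ·s − s`. -/
noncomputable def DFactObj {n m k : ℕ} (s : ℕ) (b : Fin m → ℝ)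
    (Θ : Matrix (Fin k) (Fin k) ℝ) (ν : Fin n → ℝ) (π : Fin m → ℝ) (τ : ℝ) : ℝ :=
  -(∑ i : Fin k, if k - s ≤ (i : ℕ) then Real.log (sortedEigs Θ i) else 0)
    + (∑ j, ν j) + (∑ i, π i * b i) + τ * s - s

/-!
Let `M = Fᵀ F`. For every positive definite `D ⪰ M`, two Schur complements of the block matrix
`[1, F; Fᵀ, D]` give `F D⁻¹ Fᵀ ⪯ 1`, so `Θ = D⁻¹` is feasible with `υ = 1 - diag (F D⁻¹ Fᵀ)`,
`ν = 0`, `π = 0`, `τ = 1`, and its objective value is the sum of the logarithms of the `s` largest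
eigenvalues of `D`. The `s` largest eigenvalues of `M` are those of `C = F Fᵀ`, and
`λ_s(M) = λ_s(C) > 0` because `s ≤ rank C`; raising to `λ_s(M)` all the smaller eigenvalues of `M`
therefore produces such a `D` without changing the `s` largest eigenvalues.
-/

section SortedEigenvalues

variable {k : ℕ} {M : Matrix (Fin k) (Fin k) ℝ}

theorem exists_perm_sortedEigs_eq (hM : M.IsHermitian) :
    ∃ σ : Equiv.Perm (Fin k), sortedEigs M = hM.eigenvalues ∘ σ := by
  refine ⟨Fin.revPerm.trans (Tuple.sort hM.eigenvalues), funext fun i => ?_⟩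
  simp only [sortedEigs, hM, dite_true, Function.comp_apply, Equiv.trans_apply, Fin.revPerm_apply]

theorem sortedEigs_antitone (hM : M.IsHermitian) : Antitone (sortedEigs M) := by
  intro i j hij
  simp only [sortedEigs, hM, dite_true]
  exact Tuple.monotone_sort hM.eigenvalues (Fin.rev_le_rev.mpr hij)

theorem sortedEigs_nonneg (hM : M.PosSemidef) (i : Fin k) : 0 ≤ sortedEigs M i := by
  obtain ⟨σ, hσ⟩ := exists_perm_sortedEigs_eq hM.isHermitian
  exact hσ ▸ hM.eigenvalues_nonneg (σ i)

theorem sortedEigs_pos (hM : M.PosDef) (i : Fin k) : 0 < sortedEigs M i := by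
  obtain ⟨σ, hσ⟩ := exists_perm_sortedEigs_eq hM.isHermitian
  exact hσ ▸ hM.eigenvalues_pos (σ i)

theorem roots_charpoly_eq_ofFn_sortedEigs (hM : M.IsHermitian) :
    M.charpoly.roots = List.ofFn (sortedEigs M) := by
  obtain ⟨σ, hσ⟩ := exists_perm_sortedEigs_eq hM
  rw [hM.roots_charpoly_eq_eigenvalues, Fin.univ_val_map, hσ]
  exact Multiset.coe_eq_coe.mpr (σ.ofFn_comp_perm hM.eigenvalues).symm

theorem sortedEigs_eq_of_roots_charpoly (hM : M.IsHermitian) {f : Fin k → ℝ} (hf : Antitone f)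
    (hroots : M.charpoly.roots = List.ofFn f) : sortedEigs M = f := by
  rw [roots_charpoly_eq_ofFn_sortedEigs hM, Multiset.coe_eq_coe] at hroots
  exact List.ofFn_injective <| hroots.eq_of_pairwise'
    (sortedEigs_antitone hM).sortedGE_ofFn.pairwise hf.sortedGE_ofFn.pairwise

theorem card_sortedEigs_ne_zero (hM : M.IsHermitian) :
    Fintype.card {i // sortedEigs M i ≠ 0} = M.rank := by
  obtain ⟨σ, hσ⟩ := exists_perm_sortedEigs_eq hM
  rw [hM.rank_eq_card_non_zero_eigs]
  exact Fintype.card_congr (σ.subtypeEquiv fun i => by rw [hσ, Function.comp_apply])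

theorem sortedEigs_pos_of_lt_rank (hM : M.PosSemidef) {i : Fin k} (hi : (i : ℕ) < M.rank) :
    0 < sortedEigs M i := by
  by_contra! hle
  have hsub : Finset.univ.filter (fun j => sortedEigs M j ≠ 0) ⊆ Finset.Iio i := fun j hj => by
    by_contra hij
    refine (Finset.mem_filter.mp hj).2 (le_antisymm ?_ (sortedEigs_nonneg hM j))
    exact (sortedEigs_antitone hM.isHermitian (not_lt.mp (mt Finset.mem_Iio.mpr hij))).trans hle
  have hcard := Finset.card_le_card hsub
  rw [← Fintype.card_subtype, card_sortedEigs_ne_zero hM.isHermitian, Fin.card_Iio] at hcard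
  omega

end SortedEigenvalues

section ProductSpectrum

open Polynomial in
theorem roots_charpoly_mul_comm_add_replicate {ι κ R : Type*} [Fintype ι] [DecidableEq ι]
    [Fintype κ] [DecidableEq κ] [CommRing R] [IsDomain R] (A : Matrix ι κ R) (B : Matrix κ ι R) :
    (A * B).charpoly.roots + Multiset.replicate (Fintype.card κ) 0 =
      (B * A).charpoly.roots + Multiset.replicate (Fintype.card ι) 0 := by
  have roots_X_pow_mul (l : ℕ) {p : R[X]} (hp : p.Monic) :
      (X ^ l * p).roots = p.roots + Multiset.replicate l 0 := by
    rw [roots_mul ((monic_X_pow l).mul hp).ne_zero, roots_X_pow, Multiset.nsmul_singleton, add_comm]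
  rw [← roots_X_pow_mul _ (charpoly_monic _), charpoly_mul_comm',
    roots_X_pow_mul _ (charpoly_monic _)]

variable {n k : ℕ} {A : Matrix (Fin n) (Fin k) ℝ} {B : Matrix (Fin k) (Fin n) ℝ}

theorem ofFn_sortedEigs_mul_comm_append_replicate (hAB : (A * B).PosSemidef)
    (hBA : (B * A).PosSemidef) :
    List.ofFn (sortedEigs (A * B)) ++ List.replicate k 0 =
      List.ofFn (sortedEigs (B * A)) ++ List.replicate n 0 := by
  have pairwise_ge_append {l : ℕ} (d : ℕ) {M : Matrix (Fin l) (Fin l) ℝ} (hM : M.PosSemidef) :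
      (List.ofFn (sortedEigs M) ++ List.replicate d 0).Pairwise (· ≥ ·) := by
    refine List.pairwise_append.mpr ⟨(sortedEigs_antitone hM.isHermitian).sortedGE_ofFn.pairwise,
      List.pairwise_replicate.mpr (Or.inr le_rfl), fun x hx y hy => ?_⟩
    obtain ⟨i, rfl⟩ := List.mem_ofFn.mp hx
    exact List.eq_of_mem_replicate hy ▸ sortedEigs_nonneg hM i
  have perm := roots_charpoly_mul_comm_add_replicate A B
  rw [roots_charpoly_eq_ofFn_sortedEigs hAB.isHermitian,
    roots_charpoly_eq_ofFn_sortedEigs hBA.isHermitian, Fintype.card_fin, Fintype.card_fin,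
    ← Multiset.coe_replicate, ← Multiset.coe_replicate, Multiset.coe_add, Multiset.coe_add,
    Multiset.coe_eq_coe] at perm
  exact perm.eq_of_pairwise' (pairwise_ge_append k hAB) (pairwise_ge_append n hBA)

theorem sortedEigs_mul_comm (hAB : (A * B).PosSemidef) (hBA : (B * A).PosSemidef)
    {i : Fin n} {j : Fin k} (hij : (i : ℕ) = j) : sortedEigs (A * B) i = sortedEigs (B * A) j := by
  obtain ⟨i, hi⟩ := i
  obtain ⟨j, hj⟩ := j
  obtain rfl : i = j := hij
  simpa [List.getElem?_append, hi, hj] using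
    congrArg (·[i]?) (ofFn_sortedEigs_mul_comm_append_replicate hAB hBA)

end ProductSpectrum

section FunctionalCalculus

open Polynomial in
theorem roots_charpoly_cfc {ι : Type*} [Fintype ι] [DecidableEq ι] {M : Matrix ι ι ℝ}
    (hM : M.IsHermitian) (f : ℝ → ℝ) : (cfc f M).charpoly.roots = M.charpoly.roots.map f := by
  rw [hM.charpoly_cfc_eq, hM.roots_charpoly_eq_eigenvalues, Multiset.map_map]
  simpa using! roots_multiset_prod_X_sub_C (Finset.univ.val.map (f ∘ hM.eigenvalues))

variable {k : ℕ} {M : Matrix (Fin k) (Fin k) ℝ}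

theorem roots_charpoly_cfc_eq_ofFn (hM : M.IsHermitian) (f : ℝ → ℝ) :
    (cfc f M).charpoly.roots = List.ofFn (f ∘ sortedEigs M) := by
  rw [roots_charpoly_cfc hM, roots_charpoly_eq_ofFn_sortedEigs hM, Multiset.map_coe, List.map_ofFn]

theorem sortedEigs_cfc_of_monotone (hM : M.IsHermitian) {f : ℝ → ℝ} (hf : Monotone f) :
    sortedEigs (cfc f M) = f ∘ sortedEigs M :=
  sortedEigs_eq_of_roots_charpoly (cfc_predicate f M) (hf.comp_antitone (sortedEigs_antitone hM))
    (roots_charpoly_cfc_eq_ofFn hM f)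

theorem sortedEigs_inv (hM : M.PosDef) (i : Fin k) :
    sortedEigs M⁻¹ i = (sortedEigs M i.rev)⁻¹ := by
  have hanti : Antitone fun j : Fin k => (sortedEigs M j.rev)⁻¹ := fun a b hab =>
    inv_anti₀ (sortedEigs_pos hM _) (sortedEigs_antitone hM.isHermitian (Fin.rev_le_rev.mpr hab))
  have hinv : M⁻¹ = cfc (·⁻¹ : ℝ → ℝ) M :=
    M.nonsing_inv_eq_ringInverse.trans
      (cfc_ringInverse_id (R := ℝ) M hM.isUnit hM.isHermitian).symm
  refine congrFun (sortedEigs_eq_of_roots_charpoly hM.inv.isHermitian hanti ?_) i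
  rw [hinv, roots_charpoly_cfc_eq_ofFn hM.isHermitian]
  exact Multiset.coe_eq_coe.mpr (Fin.revPerm.ofFn_comp_perm fun j => (sortedEigs M j)⁻¹).symm

end FunctionalCalculus

section EigenvalueFloor

open scoped MatrixOrder ComplexOrder

variable {ι 𝕜 : Type*} [Fintype ι] [DecidableEq ι] [RCLike 𝕜]

/-- The matrix obtained from a Hermitian matrix `M` by raising to `δ` every eigenvalue smaller than
`δ`, with the eigenvectors unchanged: it dominates `M` and is positive definite for `0 < δ`.
For non-Hermitian `M` it is the junk value `0` of `cfc`. -/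
noncomputable def eigenvalueFloor (δ : ℝ) (M : Matrix ι ι 𝕜) : Matrix ι ι 𝕜 :=
  cfc (fun x : ℝ => max x δ) M

theorem eigenvalueFloor_posDef {δ : ℝ} (hδ : 0 < δ) {M : Matrix ι ι 𝕜} (hM : M.IsHermitian) :
    (eigenvalueFloor δ M).PosDef :=
  isStrictlyPositive_iff_posDef.mp <| (cfc_isStrictlyPositive_iff (fun x : ℝ => max x δ) M
    (by fun_prop) hM).mpr fun _ _ => lt_max_of_lt_right hδ

theorem eigenvalueFloor_sub_self_posSemidef (δ : ℝ) {M : Matrix ι ι 𝕜} (hM : M.IsHermitian) :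
    (eigenvalueFloor δ M - M).PosSemidef := by
  rw [← le_iff]
  calc
    M = cfc (id : ℝ → ℝ) M := (cfc_id ℝ M hM).symm
    _ ≤ eigenvalueFloor δ M := cfc_mono fun x _ => le_max_left x δ

theorem sortedEigs_eigenvalueFloor {k : ℕ} (δ : ℝ) {M : Matrix (Fin k) (Fin k) ℝ}
    (hM : M.IsHermitian) (i : Fin k) :
    sortedEigs (eigenvalueFloor δ M) i = max (sortedEigs M i) δ :=
  congrFun (sortedEigs_cfc_of_monotone hM fun _ _ hxy => max_le_max_right δ hxy) i

end EigenvalueFloor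

section PartialSums

variable {α : Type*} [AddCommMonoid α] {s n : ℕ}

theorem sum_ite_val_lt_eq_sum_castLE (h : s ≤ n) (f : Fin n → α) :
    (∑ i : Fin n, if (i : ℕ) < s then f i else 0) = ∑ l : Fin s, f (l.castLE h) := by
  obtain ⟨t, rfl⟩ := Nat.exists_eq_add_of_le h
  simp [Fin.sum_univ_add, Fin.castAdd]

theorem sum_ite_le_val_eq_sum_rev_castLE (h : s ≤ n) (f : Fin n → α) :
    (∑ i : Fin n, if n - s ≤ (i : ℕ) then f i else 0) = ∑ l : Fin s, f (l.castLE h).rev := by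
  rw [← Equiv.sum_comp Fin.revPerm, ← sum_ite_val_lt_eq_sum_castLE h fun i => f i.rev]
  refine Finset.sum_congr rfl fun i _ => if_congr ?_ rfl rfl
  rw [Fin.revPerm_apply, Fin.val_rev]
  omega

end PartialSums

section DualSolution

open scoped ComplexOrder

theorem one_sub_mul_inv_mul_conjTranspose_posSemidef_iff {ι κ 𝕜 : Type*} [Fintype ι]
    [DecidableEq ι] [Fintype κ] [DecidableEq κ] [RCLike 𝕜] (F : Matrix ι κ 𝕜) {D : Matrix κ κ 𝕜}
    (hD : D.PosDef) : (1 - F * D⁻¹ * Fᴴ).PosSemidef ↔ (D - Fᴴ * F).PosSemidef := by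
  let := hD.isUnit.invertible
  let := invertibleOne (α := Matrix ι ι 𝕜)
  rw [← hD.fromBlocks₂₂ 1 F, PosDef.one.fromBlocks₁₁ F D, inv_one, Matrix.mul_one]

variable {n m s k : ℕ} {D : Matrix (Fin k) (Fin k) ℝ}

theorem dFactFeasible_inv (A : Matrix (Fin m) (Fin n) ℝ) {F : Matrix (Fin n) (Fin k) ℝ}
    (hD : D.PosDef) (hFD : (D - Fᵀ * F).PosSemidef) :
    DFactFeasible A F D⁻¹ (fun j => 1 - (F * D⁻¹ * Fᵀ) j j) 0 0 1 := by
  have hdiag (j : Fin n) : 0 ≤ (1 - F * D⁻¹ * Fᵀ : Matrix (Fin n) (Fin n) ℝ) j j :=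
    ((one_sub_mul_inv_mul_conjTranspose_posSemidef_iff F hD).mpr hFD).diag_nonneg
  exact ⟨hD.inv, fun j => by simpa using hdiag j, fun _ => le_rfl, fun _ => le_rfl,
    fun j => by simp⟩

theorem dFactObj_inv (hsk : s ≤ k) (b : Fin m → ℝ) (hD : D.PosDef) :
    DFactObj s b D⁻¹ (0 : Fin n → ℝ) 0 1 = ∑ l : Fin s, Real.log (sortedEigs D (l.castLE hsk)) := by
  rw [DFactObj, sum_ite_le_val_eq_sum_rev_castLE hsk fun i => Real.log (sortedEigs D⁻¹ i)]
  simp [sortedEigs_inv hD, Real.log_inv]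

end DualSolution

theorem stmt_3 {n m s k r : ℕ} (hn : 0 < n) (hm : 0 < m) (hs : 0 < s) (hsk : s ≤ k)
    (C : Matrix (Fin n) (Fin n) ℝ) (hC : C.PosSemidef)
    (hr : C.rank = r) (hsr : s ≤ r)
    (F : Matrix (Fin n) (Fin k) ℝ) (hCF : C = F * Fᵀ)
    (A : Matrix (Fin m) (Fin n) ℝ) (b : Fin m → ℝ) :
    ∃ (Θ : Matrix (Fin k) (Fin k) ℝ) (υ ν : Fin n → ℝ) (π : Fin m → ℝ) (τ : ℝ),
      DFactFeasible A F Θ υ ν π τ ∧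
      DFactObj s b Θ ν π τ =
        ∑ i : Fin n, if (i : ℕ) < s then Real.log (sortedEigs C i) else 0 := by
  have hsn : s ≤ n := hsr.trans (hr ▸ by simpa using C.rank_le_card_width)
  have hM : (Fᵀ * F).PosSemidef := posSemidef_conjTranspose_mul_self F
  have hCM (l : Fin s) : sortedEigs C (l.castLE hsn) = sortedEigs (Fᵀ * F) (l.castLE hsk) := by
    subst hCF
    exact sortedEigs_mul_comm hC hM rfl
  let last : Fin s := ⟨s - 1, Nat.sub_one_lt_of_lt hs⟩
  let δ := sortedEigs (Fᵀ * F) (last.castLE hsk)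
  have hδ : 0 < δ :=
    (sortedEigs_pos_of_lt_rank hC (hr ▸ last.isLt.trans_le hsr)).trans_eq (hCM last)
  have hδ_le (l : Fin s) : δ ≤ sortedEigs (Fᵀ * F) (l.castLE hsk) :=
    sortedEigs_antitone hM.isHermitian (Nat.le_sub_one_of_lt l.isLt)
  have hD : (eigenvalueFloor δ (Fᵀ * F)).PosDef := eigenvalueFloor_posDef hδ hM.isHermitian
  refine ⟨_, _, 0, 0, 1,
    dFactFeasible_inv A hD (eigenvalueFloor_sub_self_posSemidef δ hM.isHermitian), ?_⟩
  rw [dFactObj_inv hsk b hD, sum_ite_val_lt_eq_sum_castLE hsn]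
  refine Finset.sum_congr rfl fun l _ => ?_
  rw [sortedEigs_eigenvalueFloor δ hM.isHermitian, max_eq_left (hδ_le l), hCM]
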